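/- (Null-frame decomposition of the energy error terms.) There is a universal constant C such that for every C¹ field H = (H^{αβ}) of symmetric 4×4 matrices on ℝ^{1+3}, every C¹ scalar function ξ, and every point with x ≠ 0, the following four pointwise bounds hold: (i) |(∂_αH^{αβ})∂_βξ ∂_tξ| ≤ C[(|∂H|_{LL} + |∂̄H|)|∂ξ|² + |∂H||∂̄ξ||∂ξ|]; (ii) |(∂_tH^{αβ})∂_αξ ∂_βξ| ≤ C[|∂H|_{LL}|∂ξ|² + |∂H||∂̄ξ||∂ξ|]; (iii) |H^{αβ}∂_αξ ∂_βξ| ≤ C[|H|_{LL}|∂ξ|² + |H||∂̄ξ||∂ξ|]; (iv) |((x_i/r)H^{iβ} − H^{0β})∂_βξ ∂_tξ| ≤ C[|H|_{LL}|∂ξ|² + |H||∂̄ξ||∂ξ|]. -/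

import Mathlib

open MeasureTheory

noncomputable def pd (μ : Fin 4) (f : (Fin 4 → ℝ) → ℝ) (x : Fin 4 → ℝ) : ℝ :=
  fderiv ℝ f x (Pi.single μ 1)

noncomputable def pd3 (i : Fin 3) (f : (Fin 3 → ℝ) → ℝ) (x : Fin 3 → ℝ) : ℝ :=
  fderiv ℝ f x (Pi.single i 1)

noncomputable def rad (p : Fin 4 → ℝ) : ℝ := Real.sqrt (∑ i : Fin 3, (p i.succ) ^ 2)

noncomputable def rad3 (y : Fin 3 → ℝ) : ℝ := Real.sqrt (∑ i : Fin 3, (y i) ^ 2)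

noncomputable def spt (t : ℝ) (y : Fin 3 → ℝ) : Fin 4 → ℝ := ![t, y 0, y 1, y 2]

noncomputable def minkVF : Fin 11 → (Fin 4 → ℝ) → Fin 4 → ℝ :=
  ![fun _ => Pi.single 0 1,
    fun _ => Pi.single 1 1,
    fun _ => Pi.single 2 1,
    fun _ => Pi.single 3 1,
    fun p => p 1 • (Pi.single 2 1 : Fin 4 → ℝ) - p 2 • (Pi.single 1 1 : Fin 4 → ℝ),
    fun p => p 1 • (Pi.single 3 1 : Fin 4 → ℝ) - p 3 • (Pi.single 1 1 : Fin 4 → ℝ),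
    fun p => p 2 • (Pi.single 3 1 : Fin 4 → ℝ) - p 3 • (Pi.single 2 1 : Fin 4 → ℝ),
    fun p => p 0 • (Pi.single 1 1 : Fin 4 → ℝ) + p 1 • (Pi.single 0 1 : Fin 4 → ℝ),
    fun p => p 0 • (Pi.single 2 1 : Fin 4 → ℝ) + p 2 • (Pi.single 0 1 : Fin 4 → ℝ),
    fun p => p 0 • (Pi.single 3 1 : Fin 4 → ℝ) + p 3 • (Pi.single 0 1 : Fin 4 → ℝ),
    fun p => p]

noncomputable def GammaList : List (Fin 11) → ((Fin 4 → ℝ) → ℝ) → (Fin 4 → ℝ) → ℝ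
  | [] => fun f p => f p
  | k :: I => fun f p => fderiv ℝ (GammaList I f) p (minkVF k p)

noncomputable def derivNormSq (f : (Fin 4 → ℝ) → ℝ) (p : Fin 4 → ℝ) : ℝ :=
  ∑ μ : Fin 4, (pd μ f p) ^ 2

noncomputable def derivNorm (f : (Fin 4 → ℝ) → ℝ) (p : Fin 4 → ℝ) : ℝ :=
  Real.sqrt (derivNormSq f p)

noncomputable def dS (f : (Fin 4 → ℝ) → ℝ) (p : Fin 4 → ℝ) : ℝ :=
  (1 / 2) * (pd 0 f p + ∑ i : Fin 3, (p i.succ / rad p) * pd i.succ f p)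

noncomputable def dQ (f : (Fin 4 → ℝ) → ℝ) (p : Fin 4 → ℝ) : ℝ :=
  (1 / 2) * ((∑ i : Fin 3, (p i.succ / rad p) * pd i.succ f p) - pd 0 f p)

noncomputable def angSq (f : (Fin 4 → ℝ) → ℝ) (p : Fin 4 → ℝ) : ℝ :=
  (1 / 2) * (∑ i : Fin 3, ∑ j : Fin 3,
    ((p i.succ / rad p) * pd j.succ f p - (p j.succ / rad p) * pd i.succ f p) ^ 2)

noncomputable def goodNormSq (f : (Fin 4 → ℝ) → ℝ) (p : Fin 4 → ℝ) : ℝ :=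
  (dS f p) ^ 2 + angSq f p

noncomputable def goodNorm (f : (Fin 4 → ℝ) → ℝ) (p : Fin 4 → ℝ) : ℝ :=
  Real.sqrt (goodNormSq f p)

noncomputable def gradSq (f : (Fin 4 → ℝ) → ℝ) (p : Fin 4 → ℝ) : ℝ :=
  (pd 0 f p) ^ 2 + ∑ i : Fin 3, (pd i.succ f p) ^ 2

noncomputable def Lup (p : Fin 4 → ℝ) : Fin 4 → ℝ :=
  ![1, p 1 / rad p, p 2 / rad p, p 3 / rad p]

noncomputable def Llow (p : Fin 4 → ℝ) : Fin 4 → ℝ :=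
  ![-1, p 1 / rad p, p 2 / rad p, p 3 / rad p]

noncomputable def Lbup (p : Fin 4 → ℝ) : Fin 4 → ℝ :=
  ![1, -(p 1 / rad p), -(p 2 / rad p), -(p 3 / rad p)]

noncomputable def Evec : Fin 3 → (Fin 4 → ℝ) → Fin 4 → ℝ :=
  ![fun p => (p 2 / rad p) • (Pi.single 3 1 : Fin 4 → ℝ) - (p 3 / rad p) • (Pi.single 2 1 : Fin 4 → ℝ),
    fun p => (p 1 / rad p) • (Pi.single 3 1 : Fin 4 → ℝ) - (p 3 / rad p) • (Pi.single 1 1 : Fin 4 → ℝ),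
    fun p => (p 1 / rad p) • (Pi.single 2 1 : Fin 4 → ℝ) - (p 2 / rad p) • (Pi.single 1 1 : Fin 4 → ℝ)]

noncomputable def frameVF : Fin 5 → (Fin 4 → ℝ) → Fin 4 → ℝ :=
  ![Lup, Lbup, Evec 0, Evec 1, Evec 2]

noncomputable def mInv : Fin 4 → Fin 4 → ℝ :=
  fun α β => if α = β then (if α = 0 then -1 else 1) else 0

noncomputable def wgt (γ q : ℝ) : ℝ :=
  if 0 ≤ q then 1 + (1 + |q|) ^ (1 + 2 * γ) else 1 + (1 + |q|) ^ (-(γ / 2))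

noncomputable def wgt' (γ q : ℝ) : ℝ :=
  if 0 ≤ q then (1 + 2 * γ) * (1 + |q|) ^ (2 * γ) else (γ / 2) * (1 + |q|) ^ (-(γ / 2) - 1)

noncomputable def matNorm (H : (Fin 4 → ℝ) → Fin 4 → Fin 4 → ℝ) (p : Fin 4 → ℝ) : ℝ :=
  Real.sqrt (∑ α : Fin 4, ∑ β : Fin 4, (H p α β) ^ 2)

noncomputable def matLL (H : (Fin 4 → ℝ) → Fin 4 → Fin 4 → ℝ) (p : Fin 4 → ℝ) : ℝ :=
  |∑ α : Fin 4, ∑ β : Fin 4, H p α β * Llow p α * Llow p β|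

noncomputable def dmatNorm (H : (Fin 4 → ℝ) → Fin 4 → Fin 4 → ℝ) (p : Fin 4 → ℝ) : ℝ :=
  Real.sqrt (∑ c : Fin 4, ∑ α : Fin 4, ∑ β : Fin 4, (pd c (fun y => H y α β) p) ^ 2)

noncomputable def dmatLL (H : (Fin 4 → ℝ) → Fin 4 → Fin 4 → ℝ) (p : Fin 4 → ℝ) : ℝ :=
  Real.sqrt (∑ u : Fin 5,
    (∑ α : Fin 4, ∑ β : Fin 4,
      fderiv ℝ (fun y => H y α β) p (frameVF u p) * Llow p α * Llow p β) ^ 2)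

noncomputable def gdmatNorm (H : (Fin 4 → ℝ) → Fin 4 → Fin 4 → ℝ) (p : Fin 4 → ℝ) : ℝ :=
  Real.sqrt (∑ α : Fin 4, ∑ β : Fin 4, goodNormSq (fun y => H y α β) p)

section Helpers

lemma aux_bil (A : Fin 4 → Fin 4 → ℝ) (u v : Fin 4 → ℝ) :
    |∑ α, ∑ β, A α β * u α * v β| ≤
      Real.sqrt (∑ α, ∑ β, A α β ^ 2) * Real.sqrt (∑ α, u α ^ 2) * Real.sqrt (∑ β, v β ^ 2) := by
  have h := Finset.sum_mul_sq_le_sq_mul_sq (Finset.univ : Finset (Fin 4 × Fin 4))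
    (fun z => A z.1 z.2) (fun z => u z.1 * v z.2)
  rw [← Real.sqrt_mul (by positivity), ← Real.sqrt_mul (by positivity)]
  apply Real.abs_le_sqrt
  simp only [Fintype.sum_prod_type, mul_pow] at h
  rw [mul_assoc, Finset.sum_mul_sum]
  simpa only [mul_assoc] using h

lemma aux_core1 (A : Fin 4 → Fin 4 → ℝ) (l e d : Fin 4 → ℝ) (q D g N LL : ℝ)
    (hd : ∀ i, d i = q * l i + e i) (hq : |q| ≤ D) (hD : Real.sqrt (∑ i, d i ^ 2) ≤ D)
    (he : Real.sqrt (∑ i, e i ^ 2) ≤ 2 * g) (hl : Real.sqrt (∑ i, l i ^ 2) ≤ 2)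
    (hN : Real.sqrt (∑ α, ∑ β, A α β ^ 2) ≤ N)
    (hLL : |∑ α, ∑ β, A α β * l α * l β| ≤ LL) :
    |∑ α, ∑ β, A α β * d α * d β| ≤ LL * D ^ 2 + 6 * (N * g * D) := by
  have e1 : ∑ α, ∑ β, A α β * d α * d β = q ^ 2 * (∑ α, ∑ β, A α β * l α * l β)
      + q * (∑ α, ∑ β, A α β * l α * e β) + ∑ α, ∑ β, A α β * e α * d β := by
    simp only [Finset.mul_sum, ← Finset.sum_add_distrib]
    refine Finset.sum_congr rfl fun α _ => Finset.sum_congr rfl fun β _ => ?_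
    rw [hd α, hd β]; ring
  have b1 := aux_bil A l e
  have b2 := aux_bil A e d
  have hD0 : 0 ≤ D := (abs_nonneg q).trans hq
  have hg0 : 0 ≤ 2 * g := (Real.sqrt_nonneg _).trans he
  have hN0 : 0 ≤ N := (Real.sqrt_nonneg _).trans hN
  have c1 : |∑ α, ∑ β, A α β * l α * e β| ≤ N * 2 * (2 * g) := b1.trans (by gcongr)
  have c2 : |∑ α, ∑ β, A α β * e α * d β| ≤ N * (2 * g) * D := b2.trans (by gcongr)
  rw [e1]
  calc _ ≤ |q| ^ 2 * |∑ α, ∑ β, A α β * l α * l β| + |q| * |∑ α, ∑ β, A α β * l α * e β|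
        + |∑ α, ∑ β, A α β * e α * d β| := by
        refine (abs_add_le _ _).trans ?_
        refine add_le_add ((abs_add_le _ _).trans ?_) le_rfl
        rw [abs_mul, abs_mul, abs_pow]
    _ ≤ D ^ 2 * LL + D * (N * 2 * (2 * g)) + N * (2 * g) * D := by gcongr
    _ = _ := by ring

lemma aux_core2 (A : Fin 4 → Fin 4 → ℝ) (l e d : Fin 4 → ℝ) (q D g N LL : ℝ)
    (hd : ∀ i, d i = q * l i + e i) (hq : |q| ≤ D) (hD : Real.sqrt (∑ i, d i ^ 2) ≤ D)
    (he : Real.sqrt (∑ i, e i ^ 2) ≤ 2 * g) (hl : Real.sqrt (∑ i, l i ^ 2) ≤ 2)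
    (hN : Real.sqrt (∑ α, ∑ β, A α β ^ 2) ≤ N)
    (hLL : |∑ α, ∑ β, A α β * l α * l β| ≤ LL) :
    |(∑ α, ∑ β, A α β * l α * d β) * d 0| ≤ LL * D ^ 2 + 4 * (N * g * D) := by
  have e1 : ∑ α, ∑ β, A α β * l α * d β = q * (∑ α, ∑ β, A α β * l α * l β)
      + ∑ α, ∑ β, A α β * l α * e β := by
    simp only [Finset.mul_sum, ← Finset.sum_add_distrib]
    refine Finset.sum_congr rfl fun α _ => Finset.sum_congr rfl fun β _ => ?_
    rw [hd β]; ring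
  have b1 := aux_bil A l e
  have hD0 : 0 ≤ D := (abs_nonneg q).trans hq
  have hg0 : 0 ≤ 2 * g := (Real.sqrt_nonneg _).trans he
  have hN0 : 0 ≤ N := (Real.sqrt_nonneg _).trans hN
  have hL0 : 0 ≤ LL := (abs_nonneg _).trans hLL
  have c1 : |∑ α, ∑ β, A α β * l α * e β| ≤ N * 2 * (2 * g) := b1.trans (by gcongr)
  have d0 : |d 0| ≤ D := by
    refine le_trans (Real.abs_le_sqrt ?_) hD
    exact Finset.single_le_sum (f := fun i => d i ^ 2) (fun i _ => sq_nonneg _) (Finset.mem_univ 0)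
  rw [e1, abs_mul]
  calc _ ≤ (|q| * |∑ α, ∑ β, A α β * l α * l β| + |∑ α, ∑ β, A α β * l α * e β|) * |d 0| := by
        refine mul_le_mul_of_nonneg_right ((abs_add_le _ _).trans ?_) (abs_nonneg _)
        rw [abs_mul]
    _ ≤ (D * LL + N * 2 * (2 * g)) * D := by gcongr
    _ = _ := by ring

lemma aux_w (p : Fin 4 → ℝ) (hp : 0 < rad p) :
    (p 1 / rad p) ^ 2 + (p 2 / rad p) ^ 2 + (p 3 / rad p) ^ 2 = 1 := by
  have h : rad p ^ 2 = p 1 ^ 2 + p 2 ^ 2 + p 3 ^ 2 := by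
    unfold rad
    rw [Real.sq_sqrt (by positivity)]
    simp [Fin.sum_univ_three]
  field_simp
  linarith

lemma aux_l (p : Fin 4 → ℝ) (hp : 0 < rad p) : Real.sqrt (∑ i, Llow p i ^ 2) ≤ 2 := by
  rw [Real.sqrt_le_left (by norm_num)]
  have := aux_w p hp
  simp [Fin.sum_univ_four, Llow]
  linarith

lemma aux_q (f : (Fin 4 → ℝ) → ℝ) (p : Fin 4 → ℝ) (hp : 0 < rad p) :
    dQ f p ^ 2 ≤ derivNormSq f p := by
  have h := aux_w p hp
  have h1 : dQ f p = (1/2) * (p 1 / rad p * pd 1 f p + p 2 / rad p * pd 2 f p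
      + p 3 / rad p * pd 3 f p - pd 0 f p) := by
    simp [dQ, Fin.sum_univ_three]
  rw [h1, derivNormSq, Fin.sum_univ_four]
  generalize p 1 / rad p = a at *
  generalize p 2 / rad p = b at *
  generalize p 3 / rad p = c at *
  generalize pd 0 f p = s at *
  generalize pd 1 f p = x at *
  generalize pd 2 f p = y at *
  generalize pd 3 f p = z at *
  have k : (a*x+b*y+c*z)^2 ≤ x^2+y^2+z^2 := by
    have : (a*x+b*y+c*z)^2 + ((a*y-b*x)^2+(a*z-c*x)^2+(b*z-c*y)^2)
        = (a^2+b^2+c^2)*(x^2+y^2+z^2) := by ring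
    rw [h] at this
    nlinarith [sq_nonneg (a*y-b*x), sq_nonneg (a*z-c*x), sq_nonneg (b*z-c*y)]
  nlinarith [sq_nonneg (a*x+b*y+c*z+s), sq_nonneg x, sq_nonneg y, sq_nonneg z, sq_nonneg s]

lemma aux_e (f : (Fin 4 → ℝ) → ℝ) (p : Fin 4 → ℝ) (hp : 0 < rad p) :
    ∑ i, (pd i f p - dQ f p * Llow p i) ^ 2 ≤ 4 * goodNormSq f p := by
  have h := aux_w p hp
  have h1 : dQ f p = (1/2) * (p 1 / rad p * pd 1 f p + p 2 / rad p * pd 2 f p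
      + p 3 / rad p * pd 3 f p - pd 0 f p) := by
    simp [dQ, Fin.sum_univ_three]
  have h2 : goodNormSq f p = ((1/2) * (pd 0 f p + (p 1 / rad p * pd 1 f p + p 2 / rad p * pd 2 f p
      + p 3 / rad p * pd 3 f p)))^2 + ((p 1 / rad p * pd 2 f p - p 2 / rad p * pd 1 f p)^2
      + (p 1 / rad p * pd 3 f p - p 3 / rad p * pd 1 f p)^2
      + (p 2 / rad p * pd 3 f p - p 3 / rad p * pd 2 f p)^2) := by
    have e1 : (Fin.succ 0 : Fin 4) = 1 := rfl
    have e2 : (Fin.succ 1 : Fin 4) = 2 := rfl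
    have e3 : (Fin.succ 2 : Fin 4) = 3 := rfl
    simp only [goodNormSq, dS, angSq, Fin.sum_univ_three, e1, e2, e3]
    ring
  rw [h2, h1, Fin.sum_univ_four]
  simp only [Llow, Matrix.cons_val]
  generalize p 1 / rad p = a at *
  generalize p 2 / rad p = b at *
  generalize p 3 / rad p = c at *
  generalize pd 0 f p = s at *
  generalize pd 1 f p = x at *
  generalize pd 2 f p = y at *
  generalize pd 3 f p = z at *
  have k : (a*x+b*y+c*z)^2 + ((a*y-b*x)^2+(a*z-c*x)^2+(b*z-c*y)^2) = x^2+y^2+z^2 := by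
    have : (a*x+b*y+c*z)^2 + ((a*y-b*x)^2+(a*z-c*x)^2+(b*z-c*y)^2)
        = (a^2+b^2+c^2)*(x^2+y^2+z^2) := by ring
    rw [h] at this
    linarith
  obtain ⟨q, hq⟩ : ∃ q, q = (1/2) * (a*x+b*y+c*z - s) := ⟨_, rfl⟩
  rw [← hq]
  have k2 : (s - q * -1)^2 + (x - q*a)^2 + (y-q*b)^2+(z-q*c)^2
     = (s+q)^2 + (x^2+y^2+z^2) - 2*q*(a*x+b*y+c*z) + q^2*(a^2+b^2+c^2) := by ring
  rw [k2, h, ← k]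
  have hs : s = a*x+b*y+c*z - 2*q := by linarith
  rw [hs]
  nlinarith [sq_nonneg (a*y-b*x), sq_nonneg (a*z-c*x), sq_nonneg (b*z-c*y),
    sq_nonneg (a*x+b*y+c*z - q)]

lemma aux_single_le {ι : Type*} [Fintype ι] (f : ι → ℝ) (hf : ∀ i, 0 ≤ f i) (i : ι) :
    f i ≤ ∑ j, f j :=
  Finset.single_le_sum (f := f) (fun i _ => hf i) (Finset.mem_univ i)

lemma aux_good_nonneg (f : (Fin 4 → ℝ) → ℝ) (p : Fin 4 → ℝ) : 0 ≤ goodNormSq f p := by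
  unfold goodNormSq angSq; positivity

lemma aux_Lb (f : (Fin 4 → ℝ) → ℝ) (p : Fin 4 → ℝ) :
    dQ f p = -(1/2) * fderiv ℝ f p (frameVF 1 p) := by
  have e : frameVF 1 p = (Pi.single 0 1 : Fin 4 → ℝ) - (p 1 / rad p) • Pi.single 1 1
      - (p 2 / rad p) • Pi.single 2 1 - (p 3 / rad p) • Pi.single 3 1 := by
    funext i; fin_cases i <;> simp [frameVF, Lbup, Pi.single_apply]
  rw [e]
  have e1 : (Fin.succ 0 : Fin 4) = 1 := rfl
  have e2 : (Fin.succ 1 : Fin 4) = 2 := rfl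
  have e3 : (Fin.succ 2 : Fin 4) = 3 := rfl
  simp only [dQ, pd, Fin.sum_univ_three, e1, e2, e3, map_sub, map_smul, smul_eq_mul]
  ring

lemma aux_T (f : (Fin 4 → ℝ) → ℝ) (p : Fin 4 → ℝ) :
    pd 0 f p = (1/2) * fderiv ℝ f p (frameVF 0 p) + (1/2) * fderiv ℝ f p (frameVF 1 p) := by
  have e : (Pi.single 0 1 : Fin 4 → ℝ) = (1/2 : ℝ) • frameVF 0 p + (1/2 : ℝ) • frameVF 1 p := by
    funext i; fin_cases i <;> simp [frameVF, Lbup, Lup] <;> norm_num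
  simp only [pd]
  rw [e, map_add, map_smul, map_smul]
  rfl

lemma aux_u (H : (Fin 4 → ℝ) → Fin 4 → Fin 4 → ℝ) (p : Fin 4 → ℝ) (u : Fin 5) :
    |∑ α : Fin 4, ∑ β : Fin 4,
      fderiv ℝ (fun y => H y α β) p (frameVF u p) * Llow p α * Llow p β| ≤ dmatLL H p := by
  unfold dmatLL
  apply Real.abs_le_sqrt
  exact aux_single_le (fun u : Fin 5 => (∑ α : Fin 4, ∑ β : Fin 4,
      fderiv ℝ (fun y => H y α β) p (frameVF u p) * Llow p α * Llow p β) ^ 2)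
      (fun _ => sq_nonneg _) u

lemma aux_LLT (H : (Fin 4 → ℝ) → Fin 4 → Fin 4 → ℝ) (p : Fin 4 → ℝ) :
    |∑ α : Fin 4, ∑ β : Fin 4, pd 0 (fun y => H y α β) p * Llow p α * Llow p β|
      ≤ dmatLL H p := by
  have h0 := abs_le.1 (aux_u H p 0)
  have h1 := abs_le.1 (aux_u H p 1)
  simp only [aux_T, add_mul, Finset.sum_add_distrib, mul_assoc (1/2 : ℝ), ← Finset.mul_sum]
  rw [abs_le]; constructor <;> linarith [h0.1, h0.2, h1.1, h1.2]

lemma aux_LLQ (H : (Fin 4 → ℝ) → Fin 4 → Fin 4 → ℝ) (p : Fin 4 → ℝ) :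
    |∑ α : Fin 4, ∑ β : Fin 4, dQ (fun y => H y α β) p * Llow p α * Llow p β|
      ≤ dmatLL H p := by
  have h1 := abs_le.1 (aux_u H p 1)
  simp only [aux_Lb, mul_assoc (-(1/2) : ℝ), ← Finset.mul_sum]
  rw [abs_le]; constructor <;> linarith [h1.1, h1.2]

lemma aux_NT (H : (Fin 4 → ℝ) → Fin 4 → Fin 4 → ℝ) (p : Fin 4 → ℝ) :
    Real.sqrt (∑ α : Fin 4, ∑ β : Fin 4, pd 0 (fun y => H y α β) p ^ 2) ≤ dmatNorm H p := by
  unfold dmatNorm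
  apply Real.sqrt_le_sqrt
  exact aux_single_le (fun c : Fin 4 => ∑ α : Fin 4, ∑ β : Fin 4, pd c (fun y => H y α β) p ^ 2)
      (fun _ => by positivity) 0

lemma aux_NQ (H : (Fin 4 → ℝ) → Fin 4 → Fin 4 → ℝ) (p : Fin 4 → ℝ) (hp : 0 < rad p) :
    Real.sqrt (∑ α : Fin 4, ∑ β : Fin 4, dQ (fun y => H y α β) p ^ 2) ≤ dmatNorm H p := by
  unfold dmatNorm
  apply Real.sqrt_le_sqrt
  rw [Finset.sum_comm]
  refine (Finset.sum_le_sum fun β _ => Finset.sum_le_sum fun α _ => aux_q _ p hp).trans ?_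
  simp only [derivNormSq]
  apply le_of_eq
  rw [Finset.sum_comm (γ := Fin 4)]
  simp only [Fin.sum_univ_four]
  ring

lemma aux_err (H : (Fin 4 → ℝ) → Fin 4 → Fin 4 → ℝ) (p : Fin 4 → ℝ) (hp : 0 < rad p)
    (i α β : Fin 4) :
    |pd i (fun y => H y α β) p - dQ (fun y => H y α β) p * Llow p i| ≤ 2 * gdmatNorm H p := by
  have h1 := aux_e (fun y => H y α β) p hp
  have h2 := aux_single_le (fun i => (pd i (fun y => H y α β) p
    - dQ (fun y => H y α β) p * Llow p i) ^ 2) (fun _ => sq_nonneg _) i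
  have h3 := aux_single_le (fun b => goodNormSq (fun y => H y α b) p)
    (fun _ => aux_good_nonneg _ _) β
  have h4 := aux_single_le (fun a => ∑ b, goodNormSq (fun y => H y a b) p)
    (fun _ => Finset.sum_nonneg fun _ _ => aux_good_nonneg _ _) α
  have h5 : gdmatNorm H p ^ 2 = ∑ a, ∑ b, goodNormSq (fun y => H y a b) p :=
    Real.sq_sqrt (Finset.sum_nonneg fun _ _ => Finset.sum_nonneg fun _ _ => aux_good_nonneg _ _)
  have h6 : 0 ≤ gdmatNorm H p := Real.sqrt_nonneg _
  apply abs_le_of_sq_le_sq _ (by positivity)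
  nlinarith

end Helpers

/-- Null-frame decomposition of the energy error terms: there is a
universal constant `C` such that for every `C¹` symmetric matrix field `H`, every `C¹`
scalar `ξ` and every point with `x ≠ 0`, the four pointwise bounds (i)–(iv) hold. -/
theorem stmt9 :
    ∃ C > (0 : ℝ),
      ∀ H : (Fin 4 → ℝ) → Fin 4 → Fin 4 → ℝ,
        (∀ p : Fin 4 → ℝ, ∀ α β : Fin 4, H p α β = H p β α) →
        (∀ α β : Fin 4, ContDiff ℝ 1 fun p => H p α β) →
      ∀ ξ : (Fin 4 → ℝ) → ℝ, ContDiff ℝ 1 ξ →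
      ∀ p : Fin 4 → ℝ, 0 < rad p →
        (|∑ β : Fin 4, (∑ α : Fin 4, pd α (fun y => H y α β) p) * pd β ξ p * pd 0 ξ p|
            ≤ C * ((dmatLL H p + gdmatNorm H p) * derivNorm ξ p ^ 2
                + dmatNorm H p * goodNorm ξ p * derivNorm ξ p))
        ∧ (|∑ α : Fin 4, ∑ β : Fin 4, pd 0 (fun y => H y α β) p * pd α ξ p * pd β ξ p|
            ≤ C * (dmatLL H p * derivNorm ξ p ^ 2
                + dmatNorm H p * goodNorm ξ p * derivNorm ξ p))
        ∧ (|∑ α : Fin 4, ∑ β : Fin 4, H p α β * pd α ξ p * pd β ξ p|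
            ≤ C * (matLL H p * derivNorm ξ p ^ 2
                + matNorm H p * goodNorm ξ p * derivNorm ξ p))
        ∧ (|∑ β : Fin 4,
              ((∑ i : Fin 3, (p i.succ / rad p) * H p i.succ β) - H p 0 β)
                * pd β ξ p * pd 0 ξ p|
            ≤ C * (matLL H p * derivNorm ξ p ^ 2
                + matNorm H p * goodNorm ξ p * derivNorm ξ p)) := by
  refine ⟨64, by norm_num, ?_⟩
  intro H _ _ ξ _ p hp
  have hD0 : 0 ≤ derivNorm ξ p := Real.sqrt_nonneg _
  have hg0 : 0 ≤ goodNorm ξ p := Real.sqrt_nonneg _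
  have hN0 : 0 ≤ matNorm H p := Real.sqrt_nonneg _
  have hdN0 : 0 ≤ dmatNorm H p := Real.sqrt_nonneg _
  have hdL0 : 0 ≤ dmatLL H p := Real.sqrt_nonneg _
  have hL0 : 0 ≤ matLL H p := abs_nonneg _
  have hG0 : 0 ≤ gdmatNorm H p := Real.sqrt_nonneg _
  have hd : ∀ i, pd i ξ p = dQ ξ p * Llow p i + (pd i ξ p - dQ ξ p * Llow p i) := by
    intro i; ring
  have hq : |dQ ξ p| ≤ derivNorm ξ p := Real.abs_le_sqrt (aux_q ξ p hp)
  have hD : Real.sqrt (∑ i, pd i ξ p ^ 2) ≤ derivNorm ξ p := le_rfl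
  have he : Real.sqrt (∑ i, (pd i ξ p - dQ ξ p * Llow p i) ^ 2) ≤ 2 * goodNorm ξ p := by
    rw [Real.sqrt_le_left (by positivity), mul_pow, goodNorm, Real.sq_sqrt (aux_good_nonneg _ _)]
    linarith [aux_e ξ p hp]
  have hl := aux_l p hp
  have t1 : 0 ≤ dmatLL H p * derivNorm ξ p ^ 2 := by positivity
  have t2 : 0 ≤ matLL H p * derivNorm ξ p ^ 2 := by positivity
  have t3 : 0 ≤ gdmatNorm H p * derivNorm ξ p ^ 2 := by positivity
  have t4 : 0 ≤ dmatNorm H p * goodNorm ξ p * derivNorm ξ p := by positivity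
  have t5 : 0 ≤ matNorm H p * goodNorm ξ p * derivNorm ξ p := by positivity
  refine ⟨?_, ?_, ?_, ?_⟩
  · have m := aux_core2 (fun α β => dQ (fun y => H y α β) p) (Llow p) _ (fun i => pd i ξ p) _ _ _
      _ _ hd hq hD he hl (aux_NQ H p hp) (aux_LLQ H p)
    have hdi : ∀ i, |pd i ξ p| ≤ derivNorm ξ p := fun i =>
      Real.abs_le_sqrt (aux_single_le (fun i => pd i ξ p ^ 2) (fun _ => sq_nonneg _) i)
    have e1 : ∑ β : Fin 4, (∑ α : Fin 4, pd α (fun y => H y α β) p) * pd β ξ p * pd 0 ξ p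
        = (∑ α, ∑ β, dQ (fun y => H y α β) p * Llow p α * pd β ξ p) * pd 0 ξ p
          + ∑ α, ∑ β, (pd α (fun y => H y α β) p - dQ (fun y => H y α β) p * Llow p α)
            * pd β ξ p * pd 0 ξ p := by
      simp only [Finset.sum_mul]
      rw [Finset.sum_comm, ← Finset.sum_add_distrib]
      refine Finset.sum_congr rfl fun α _ => ?_
      rw [← Finset.sum_add_distrib]
      refine Finset.sum_congr rfl fun β _ => ?_
      ring
    have m2 : |∑ α, ∑ β, (pd α (fun y => H y α β) p - dQ (fun y => H y α β) p * Llow p α)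
            * pd β ξ p * pd 0 ξ p| ≤ ∑ α : Fin 4, ∑ β : Fin 4,
            2 * gdmatNorm H p * derivNorm ξ p * derivNorm ξ p := by
      refine (Finset.abs_sum_le_sum_abs _ _).trans (Finset.sum_le_sum fun α _ => ?_)
      refine (Finset.abs_sum_le_sum_abs _ _).trans (Finset.sum_le_sum fun β _ => ?_)
      rw [abs_mul, abs_mul]
      have := aux_err H p hp α α β
      have h1 := hdi β
      have h2 := hdi 0
      gcongr
    simp only [Fin.sum_const, smul_eq_mul, nsmul_eq_mul] at m2
    rw [e1]
    refine (abs_add_le _ _).trans ?_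
    push_cast at m2
    linarith
  · have m := aux_core1 (fun α β => pd 0 (fun y => H y α β) p) (Llow p) _ (fun i => pd i ξ p) _ _ _
      _ _ hd hq hD he hl (aux_NT H p) (aux_LLT H p)
    linarith
  · have m := aux_core1 (fun α β => H p α β) (Llow p) _ (fun i => pd i ξ p) _ _ _
      (matNorm H p) (matLL H p) hd hq hD he hl le_rfl le_rfl
    linarith
  · have m := aux_core2 (fun α β => H p α β) (Llow p) _ (fun i => pd i ξ p) _ _ _
      (matNorm H p) (matLL H p) hd hq hD he hl le_rfl le_rfl
    have e1 : (Fin.succ 0 : Fin 4) = 1 := rfl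
    have e2 : (Fin.succ 1 : Fin 4) = 2 := rfl
    have e3 : (Fin.succ 2 : Fin 4) = 3 := rfl
    have e : ∑ β : Fin 4, ((∑ i : Fin 3, (p i.succ / rad p) * H p i.succ β) - H p 0 β)
                * pd β ξ p * pd 0 ξ p
        = (∑ α, ∑ β, H p α β * Llow p α * pd β ξ p) * pd 0 ξ p := by
      simp only [Fin.sum_univ_four, Fin.sum_univ_three, e1, e2, e3, Llow, Matrix.cons_val]
      ring
    rw [e]
    linarith
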